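/- Let r > 3 and q ≥ 2 be integers. Then the 2q sets F^r_1,…,F^r_q, G^r_1,…,G^r_q are pairwise distinct and none of them is contained in another; consequently they are precisely the facets of the simplicial complex L^r_q. -/

import Mathlib

/-!
STATEMENT 2: Let r > 3 and q ≥ 2 be integers. Then the 2q sets F^r_1,…,F^r_q, G^r_1,…,G^r_q
are pairwise distinct and none of them is contained in another; consequently they are
precisely the facets of the simplicial complex L^r_q.
-/

open Finset

/-- `F` is a facet (maximal face) of the complex with face set `K`. -/
def IsFacet {V : Type*} (K : Set (Finset V)) (F : Finset V) : Prop :=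
  F ∈ K ∧ ∀ G ∈ K, F ⊆ G → F = G

/-- `N^r_q`: exponent vectors in `ℕ^q` whose coordinates sum to `r`. -/
def Nrq (r q : ℕ) : Set (Fin q → ℕ) :=
  {a | ∑ k, a k = r}

/-- The set `F^r_i`, with `s = ⌈r/2⌉ = (r+1)/2`. -/
def Fset (r q : ℕ) (i : Fin q) : Set (Fin q → ℕ) :=
  {a | (∑ k, a k = r) ∧ a i ≤ max (r - 1) ((r + 1) / 2) ∧
    ∀ j, j ≠ i → a j ≤ (r + 1) / 2}

/-- The set `G^r_i`. -/
def Gset (r q : ℕ) (i : Fin q) : Set (Fin q → ℕ) :=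
  {a | (∑ k, a k = r) ∧ r - 1 ≤ a i}

/-- The faces of the simplicial complex `L^r_q`: all (finite) subsets of the sets
`F^r_1,…,F^r_q, G^r_1,…,G^r_q`. -/
def LFaces (r q : ℕ) : Set (Finset (Fin q → ℕ)) :=
  {σ | ∃ i : Fin q, (σ : Set (Fin q → ℕ)) ⊆ Fset r q i ∨ (σ : Set (Fin q → ℕ)) ⊆ Gset r q i}

/-- The family consisting of the `2q` sets `F^r_1,…,F^r_q, G^r_1,…,G^r_q`. -/
def FG (r q : ℕ) : Fin q ⊕ Fin q → Set (Fin q → ℕ) :=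
  Sum.elim (Fset r q) (Gset r q)

/-!
Put `s = ⌈r/2⌉`, so that `s < r - 1` because `r ≥ 4`. For `i ≠ j`, the vector
`(r - 1) e_i + e_j` lies in `F_i` but not in `F_j`. The vector `r e_i` lies in `G_i`, but in no
`F_j` and in no other `G_j`. For `l ≠ j`, the vector `⌊r/2⌋ e_j + ⌈r/2⌉ e_l` lies in `B ⊆ F_i` for
every `i`, but not in `G_j`. So no two of the `2q` sets are comparable. A facet of the complex
they generate is one of them, since a finite proper subset of a generator can be enlarged by a
point; conversely, each is a facet because it is contained in no other.
-/

section GeneratedComplex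

variable {V : Type*}

/-- The faces of the simplicial complex generated by a family `S` of vertex sets. The generators may
be infinite, but faces are finite. -/
def generatedFaces (S : Set (Set V)) : Set (Finset V) :=
  {σ | ∃ A ∈ S, (σ : Set V) ⊆ A}

theorem coe_mem_of_isFacet_generatedFaces {S : Set (Set V)} {σ : Finset V}
    (hσ : IsFacet (generatedFaces S) σ) : (σ : Set V) ∈ S := by
  classical
  obtain ⟨⟨A, hA, hσA⟩, hmax⟩ := hσ
  suffices A ⊆ σ from hσA.antisymm this ▸ hA
  intro v hv
  have hface : insert v σ ∈ generatedFaces S :=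
    ⟨A, hA, by simpa only [coe_insert] using Set.insert_subset hv hσA⟩
  exact insert_eq_self.1 (hmax _ hface (subset_insert v σ)).symm

theorem isFacet_generatedFaces_of_coe_mem {S : Set (Set V)} (hS : IsAntichain (· ⊆ ·) S)
    {σ : Finset V} (hσ : (σ : Set V) ∈ S) : IsFacet (generatedFaces S) σ := by
  refine ⟨⟨σ, hσ, Set.Subset.rfl⟩, ?_⟩
  rintro τ ⟨A, hA, hτA⟩ hστ
  have hσA : (σ : Set V) = A := hS.eq hσ hA ((coe_subset.2 hστ).trans hτA)
  exact hστ.antisymm (coe_subset.1 (hσA ▸ hτA))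

theorem isFacet_generatedFaces_iff {S : Set (Set V)} (hS : IsAntichain (· ⊆ ·) S)
    {σ : Finset V} : IsFacet (generatedFaces S) σ ↔ (σ : Set V) ∈ S :=
  ⟨coe_mem_of_isFacet_generatedFaces, isFacet_generatedFaces_of_coe_mem hS⟩

end GeneratedComplex

theorem sum_single_add_single {ι M : Type*} [Fintype ι] [DecidableEq ι] [AddCommMonoid M]
    (i j : ι) (a b : M) : ∑ k, (Pi.single i a + Pi.single j b : ι → M) k = a + b := by
  simp [sum_add_distrib]

section Facets

variable {r q : ℕ}

/-- The set `B^r` of exponent vectors all of whose coordinates are at most `s = ⌈r/2⌉`, which is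
contained in every `F^r_i`. -/
def Bset (r q : ℕ) : Set (Fin q → ℕ) :=
  {a | (∑ k, a k = r) ∧ ∀ j, a j ≤ (r + 1) / 2}

theorem mem_Bset_iff_mem_Fset {a : Fin q → ℕ} (i : Fin q) :
    a ∈ Bset r q ↔ a ∈ Fset r q i ∧ a i ≤ (r + 1) / 2 := by
  constructor
  · rintro ⟨hsum, hle⟩
    exact ⟨⟨hsum, (hle i).trans (le_max_right _ _), fun j _ => hle j⟩, hle i⟩
  · rintro ⟨⟨hsum, -, hle⟩, hi⟩
    refine ⟨hsum, fun j => ?_⟩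
    obtain rfl | hj := eq_or_ne j i
    exacts [hi, hle j hj]

theorem Bset_subset_Fset (i : Fin q) : Bset r q ⊆ Fset r q i :=
  fun _ ha => ((mem_Bset_iff_mem_Fset i).1 ha).1

theorem single_add_single_mem_Fset {i j : Fin q} (hij : i ≠ j) {a b : ℕ} (hsum : a + b = r)
    (ha : a ≤ max (r - 1) ((r + 1) / 2)) (hb : b ≤ (r + 1) / 2) :
    Pi.single i a + Pi.single j b ∈ Fset r q i := by
  refine ⟨(sum_single_add_single i j a b).trans hsum, by simpa [hij] using ha, fun k hk => ?_⟩
  obtain rfl | hkj := eq_or_ne k j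
  · simpa [hk] using hb
  · simp [hk, hkj]

theorem single_add_single_mem_Bset {i j : Fin q} (hij : i ≠ j) {a b : ℕ} (hsum : a + b = r)
    (ha : a ≤ (r + 1) / 2) (hb : b ≤ (r + 1) / 2) :
    Pi.single i a + Pi.single j b ∈ Bset r q :=
  (mem_Bset_iff_mem_Fset i).2
    ⟨single_add_single_mem_Fset hij hsum (ha.trans (le_max_right _ _)) hb, by simpa [hij] using ha⟩

theorem single_mem_Gset (i : Fin q) : Pi.single i r ∈ Gset r q i :=
  ⟨by simp, by simp⟩

theorem single_notMem_Fset (hr : 2 ≤ r) (i j : Fin q) : Pi.single i r ∉ Fset r q j := by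
  rintro ⟨-, hj, hne⟩
  obtain rfl | hij := eq_or_ne i j
  · rw [Pi.single_eq_same] at hj
    omega
  · have hi := hne i hij
    rw [Pi.single_eq_same] at hi
    omega

theorem eq_of_Fset_subset_Fset (hr : 4 ≤ r) {i j : Fin q} (h : Fset r q i ⊆ Fset r q j) :
    i = j := by
  by_contra hij
  have hmem : Pi.single i (r - 1) + Pi.single j 1 ∈ Fset r q i :=
    single_add_single_mem_Fset hij (by omega) (le_max_left _ _) (by omega)
  have hle : r - 1 ≤ (r + 1) / 2 := by simpa [hij] using (h hmem).2.2 i hij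
  omega

theorem not_Bset_subset_Gset (hr : 3 ≤ r) (hq : 2 ≤ q) (j : Fin q) :
    ¬ Bset r q ⊆ Gset r q j := by
  intro h
  have : Nontrivial (Fin q) := Fin.nontrivial_iff_two_le.2 hq
  obtain ⟨l, hl⟩ := exists_ne j
  have hmem : Pi.single j (r / 2) + Pi.single l ((r + 1) / 2) ∈ Bset r q :=
    single_add_single_mem_Bset hl.symm (by omega) (by omega) le_rfl
  have hle : r - 1 ≤ r / 2 := by simpa [hl.symm] using (h hmem).2
  omega

theorem not_Fset_subset_Gset (hr : 3 ≤ r) (hq : 2 ≤ q) (i j : Fin q) :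
    ¬ Fset r q i ⊆ Gset r q j :=
  fun h => not_Bset_subset_Gset hr hq j ((Bset_subset_Fset i).trans h)

theorem not_Gset_subset_Fset (hr : 2 ≤ r) (i j : Fin q) : ¬ Gset r q i ⊆ Fset r q j :=
  fun h => single_notMem_Fset hr i j (h (single_mem_Gset i))

theorem eq_of_Gset_subset_Gset (hr : 2 ≤ r) {i j : Fin q} (h : Gset r q i ⊆ Gset r q j) :
    i = j := by
  by_contra hij
  have hle : r - 1 ≤ (Pi.single i r : Fin q → ℕ) j := (h (single_mem_Gset i)).2
  rw [Pi.single_eq_of_ne' hij] at hle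
  omega

theorem eq_of_FG_subset_FG (hr : 4 ≤ r) (hq : 2 ≤ q) {x y : Fin q ⊕ Fin q}
    (h : FG r q x ⊆ FG r q y) : x = y := by
  rcases x with i | i <;> rcases y with j | j
  · exact congrArg Sum.inl (eq_of_Fset_subset_Fset hr h)
  · exact absurd h (not_Fset_subset_Gset (by omega) hq i j)
  · exact absurd h (not_Gset_subset_Fset (by omega) i j)
  · exact congrArg Sum.inr (eq_of_Gset_subset_Gset (by omega) h)

theorem isAntichain_range_FG (hr : 4 ≤ r) (hq : 2 ≤ q) :
    IsAntichain (· ⊆ ·) (Set.range (FG r q)) := by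
  rintro _ ⟨x, rfl⟩ _ ⟨y, rfl⟩ hne hsub
  exact hne (congrArg (FG r q) (eq_of_FG_subset_FG hr hq hsub))

theorem LFaces_eq_generatedFaces (r q : ℕ) :
    LFaces r q = generatedFaces (Set.range (FG r q)) := by
  ext σ
  simp only [LFaces, generatedFaces, Set.exists_range_iff, Set.mem_ofPred_eq]
  simp [FG, exists_or]

end Facets

theorem facets_of_Lrq (r q : ℕ) (hr : 4 ≤ r) (hq : 2 ≤ q) :
    (∀ x y : Fin q ⊕ Fin q, FG r q x ⊆ FG r q y → x = y) ∧
    (∀ σ : Finset (Fin q → ℕ),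
      IsFacet (LFaces r q) σ ↔ ∃ x : Fin q ⊕ Fin q, (σ : Set (Fin q → ℕ)) = FG r q x) := by
  refine ⟨fun _ _ => eq_of_FG_subset_FG hr hq, fun σ => ?_⟩
  rw [LFaces_eq_generatedFaces, isFacet_generatedFaces_iff (isAntichain_range_FG hr hq)]
  simp only [Set.mem_range, eq_comm]
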